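/- The multilinear GL_d-invariant functions on End(V)^{⊕m}, where GL_d = GL(V₁)×⋯×GL(Vₙ) acts by simultaneous local conjugation on V = V₁⊗⋯⊗Vₙ, are spanned by the trace monomials Tr_σ for σ ∈ (S_m)ⁿ, where for σ = (σ₁,…,σₙ), Tr_σ(⊗ⱼM_{j1}, …, ⊗ⱼM_{jm}) = ∏ᵢ T_{σᵢ}, with T_{σᵢ} being the product over cycles (r₁⋯r_k) of σᵢ of Tr(M_{i r₁}⋯M_{i r_k}), extended multilinearly. -/

import Mathlib

/-- The Kronecker (tensor) product `g₁ ⊗ ⋯ ⊗ gₙ` of local matrices. -/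
noncomputable def kron {k : Type*} [Field k] {n : ℕ} {d : Fin n → ℕ}
    (g : ∀ i, Matrix (Fin (d i)) (Fin (d i)) k) :
    Matrix (∀ i, Fin (d i)) (∀ i, Fin (d i)) k :=
  fun a b => ∏ i, g i (a i) (b i)

/-- The trace monomial `Tr_σ` for `σ = (σ₁,…,σₙ) ∈ (S_m)ⁿ`: the multilinear extension of
`⊗ⱼMⱼ ↦ ∏ᵢ T_{σᵢ}`, where `T_{σᵢ}` is the product over cycles `(r₁⋯r_k)` of `σᵢ` of
`Tr(M_{i r₁} ⋯ M_{i r_k})`.  Concretely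
`Tr_σ(M₁,…,M_m) = ∑_a ∏ⱼ Mⱼ (a j) (fun i => a (σᵢ j) i)`. -/
noncomputable def trMon {k : Type*} [Field k] {n m : ℕ} {d : Fin n → ℕ}
    (σ : Fin n → Equiv.Perm (Fin m))
    (M : Fin m → Matrix (∀ i, Fin (d i)) (∀ i, Fin (d i)) k) : k :=
  ∑ a : Fin m → ∀ i, Fin (d i), ∏ j, M j (a j) (fun i => a (σ i j) i)

/-- A function of `m` matrix arguments is multilinear if it is linear in each slot. -/
def IsMultilinearFn {k : Type*} [Field k] {m : ℕ} {α : Type*} [AddCommGroup α] [Module k α]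
    (F : (Fin m → α) → k) : Prop :=
  ∀ (M : Fin m → α) (j : Fin m) (x y : α) (c : k),
    F (Function.update M j (x + c • y)) =
      F (Function.update M j x) + c * F (Function.update M j y)

/-!
A multilinear form on `End(V)^{⊕m}` is `M ↦ tr ((M₁ ⊗ ⋯ ⊗ M_m) T)` for a unique `T ∈ End(V^{⊗m})`,
and `T` is the matrix of a permutation of tensor factors exactly when the form is a trace monomial.
Since the trace pairing is nondegenerate, the form is `GL_d`-invariant iff `T` commutes with every
`g^{⊗m}`, so the claim is Schur–Weyl duality for `GL_d` and `(S_m)ⁿ`. One half of the duality says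
that the `g^{⊗m}` span the commutant of `(S_m)ⁿ`: their entries are monomials in the entries of
`g`, two entries are the same monomial iff they lie in one `(S_m)ⁿ`-orbit, and distinct monomials
stay linearly independent where the determinants do not vanish. The other half is the double
centralizer theorem for the semisimple group algebra of `(S_m)ⁿ`.
-/

section Permutations

variable {α β : Type*} [Fintype α] [DecidableEq β]

theorem exists_perm_eq_comp_of_card_fiber_eq {f g : α → β}
    (h : ∀ b, Fintype.card {a // f a = b} = Fintype.card {a // g a = b}) :
    ∃ σ : Equiv.Perm α, f = g ∘ σ := by
  let e b := Fintype.equivOfCardEq (h b)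
  exact ⟨Equiv.ofFiberEquiv e, funext fun a ↦ (Equiv.ofFiberEquiv_map e a).symm⟩

end Permutations

section DoubleCentralizer

theorem centralizer_centralizer_eq_of_isSemisimpleModule {R V : Type*} [CommRing R]
    [AddCommGroup V] [Module R V] [Module.Finite R V] (A : Subalgebra R (Module.End R V))
    [IsSemisimpleModule A V] :
    Subalgebra.centralizer R (Subalgebra.centralizer R (A : Set (Module.End R V))) = A := by
  refine le_antisymm (fun T hT ↦ ?_) (Subalgebra.le_centralizer_centralizer R)
  -- `T` is linear over `End_A V`, so by density it agrees with some `a : A` on generators of `V`.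
  let f : Module.End (Module.End A V) V :=
    { toFun := T
      map_add' := T.map_add
      map_smul' φ v := by
        have hφ : φ.restrictScalars R ∈ Subalgebra.centralizer R (A : Set (Module.End R V)) :=
          fun a ha ↦ LinearMap.ext fun w ↦ (φ.map_smul ⟨a, ha⟩ w).symm
        exact (LinearMap.congr_fun (hT _ hφ) v).symm }
  obtain ⟨s, hs⟩ := Module.Finite.fg_top (R := R) (M := V)
  obtain ⟨a, ha⟩ := jacobson_density f s
  have : T = a := LinearMap.ext_on hs ha
  exact this ▸ a.2

theorem mem_span_range_of_commute_of_commute {k G V : Type*} [Field k] [Group G] [Finite G]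
    [NeZero (Nat.card G : k)] [AddCommGroup V] [Module k V] [Module.Finite k V]
    (ρ : G →* Module.End k V) {T : Module.End k V}
    (hT : ∀ S, (∀ g, Commute S (ρ g)) → Commute T S) :
    T ∈ Submodule.span k (Set.range ρ) := by
  let π := MonoidAlgebra.lift k (Module.End k V) G ρ
  have : IsSemisimpleRing π.range :=
    RingHom.isSemisimpleRing_of_surjective _ π.rangeRestrict_surjective
  have hTπ : T ∈ π.range := by
    rw [← centralizer_centralizer_eq_of_isSemisimpleModule π.range]
    refine fun S hS ↦ (hT S fun g ↦ ?_).symm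
    exact (hS (ρ g) ⟨MonoidAlgebra.of k G g, by simp [π]⟩).symm
  obtain ⟨r, rfl⟩ := π.mem_range.mp hTπ
  rw [MonoidAlgebra.lift_apply]
  exact Submodule.sum_mem _ fun g _ ↦
    Submodule.smul_mem _ _ (Submodule.subset_span (Set.mem_range_self g))

end DoubleCentralizer

section PermutationMatrices

open Matrix

variable {k G X : Type*} [Field k] [Group G] [Finite G] [NeZero (Nat.card G : k)]
  [Fintype X] [DecidableEq X]

theorem mem_span_permMatrix_of_commute (φ : G →* Equiv.Perm X) {T : Matrix X X k}
    (hT : ∀ S : Matrix X X k, (∀ g, Commute S ((φ g).permMatrix k)) → Commute T S) :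
    T ∈ Submodule.span k (Set.range fun g ↦ (φ g).permMatrix k) := by
  let ρ : G →* Module.End k (X → k) :=
    (toLinAlgEquiv' : Matrix X X k ≃ₐ[k] _).toMonoidHom.comp (permMatrixHom.comp φ)
  have hρ : toLinAlgEquiv' T ∈ Submodule.span k (Set.range ρ) := by
    refine mem_span_range_of_commute_of_commute ρ fun S hS ↦ ?_
    have := hT (toLinAlgEquiv'.symm S) fun g ↦ by
      simpa [ρ] using (hS g⁻¹).map (toLinAlgEquiv' : Matrix X X k ≃ₐ[k] _).symm
    simpa using this.map (toLinAlgEquiv' : Matrix X X k ≃ₐ[k] _)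
  have hspan := Submodule.mem_map_of_mem (f := toLinAlgEquiv'.symm.toLinearMap) hρ
  rw [Submodule.map_span, ← Set.range_comp] at hspan
  rw [← (Equiv.inv G).surjective.range_comp]
  simpa [ρ, Function.comp_def] using hspan

theorem commute_permMatrix_iff {R : Type*} [Semiring R] {S : Matrix X X R} {σ : Equiv.Perm X} :
    Commute S (σ.permMatrix R) ↔ ∀ a b, S (σ a) (σ b) = S a b := by
  rw [commute_iff_eq, PEquiv.mul_toMatrix_toPEquiv, PEquiv.toMatrix_toPEquiv_mul, ← Matrix.ext_iff]
  refine forall_congr' fun a ↦ (σ.forall_congr_left.trans ?_).symm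
  exact forall_congr' fun b ↦ by simp [eq_comm]

end PermutationMatrices

section Polynomials

open MvPolynomial

variable {k τ Y : Type*} [Field k] [Infinite k] [Finite Y]

theorem mem_span_monomials_of_factorsThrough (e : Y → τ →₀ ℕ) {f : MvPolynomial τ k} (hf : f ≠ 0)
    {s : Y → k} (hs : s.FactorsThrough e) :
    s ∈ Submodule.span k
      ((fun x y ↦ (e y).prod fun t n ↦ x t ^ n) '' {x : τ → k | eval x f ≠ 0}) := by
  classical
  have := Fintype.ofFinite Y
  by_contra hmem
  obtain ⟨w, hw, hker⟩ := Submodule.exists_le_ker_of_notMem hmem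
  -- If `w` kills the span, the polynomial `p = ∑ y, w(δ_y) X^{e y}` vanishes wherever `f` does not,
  -- so `f * p = 0` and `p = 0`. Applying the linear map `X^{e y} ↦ s y` to `p` gives `w s = 0`.
  let c y := w fun y' ↦ if y = y' then 1 else 0
  have hc v : w v = ∑ y, c y * v y :=
    (w.pi_apply_eq_sum_univ v).trans (Finset.sum_congr rfl fun _ _ ↦ mul_comm _ _)
  have hp : ∑ y, c y • monomial (e y) (1 : k) = 0 := by
    refine (mul_eq_zero.mp (MvPolynomial.funext fun x ↦ ?_)).resolve_right hf
    rw [map_mul, map_zero, mul_eq_zero, or_iff_not_imp_right]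
    intro hx
    have : w _ = 0 := hker (Submodule.subset_span ⟨x, hx, rfl⟩)
    simpa [eval_monomial, hc] using this
  let L : MvPolynomial τ k →ₗ[k] k := (basisMonomials τ k).constr k (Function.extend e s 0)
  have hL y : L (monomial (e y) 1) = s y := by
    have := (basisMonomials τ k).constr_basis k (Function.extend e s 0) (e y)
    rwa [coe_basisMonomials, hs.extend_apply] at this
  have : w s = L (∑ y, c y • monomial (e y) 1) := by simp [hc, hL]
  exact hw (by rw [this, hp, map_zero])

theorem exists_mvPolynomial_ne_zero_isUnit {k ι : Type*} {κ : ι → Type*} [Field k] [Finite ι]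
    [∀ i, Fintype (κ i)] [∀ i, DecidableEq (κ i)] :
    ∃ f : MvPolynomial (Σ i, κ i × κ i) k, f ≠ 0 ∧ ∀ x, eval x f ≠ 0 →
      ∀ i, IsUnit (Matrix.of fun p q ↦ x ⟨i, (p, q)⟩) := by
  have := Fintype.ofFinite ι
  let D i := (Matrix.mvPolynomialX (κ i) (κ i) k).det
  refine ⟨∏ i, rename (Sigma.mk i) (D i), ?_, fun x hx i ↦ ?_⟩
  · refine Finset.prod_ne_zero_iff.mpr fun i _ ↦ ?_
    rw [Ne, rename_eq_zero_iff_of_injective _ sigma_mk_injective]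
    exact Matrix.det_mvPolynomialX_ne_zero _ _
  · rw [map_prod, Finset.prod_ne_zero_iff] at hx
    have := hx i (Finset.mem_univ i)
    rw [eval_rename, Matrix.eval_det_mvPolynomialX] at this
    exact (Matrix.isUnit_iff_isUnit_det _).mpr this.isUnit

end Polynomials

section PiKronecker

open Matrix

variable {ι R : Type*} {X : ι → Type*} [Fintype ι] [CommSemiring R]

/-- The Kronecker product `⨂ᵢ Mᵢ` of a family of square matrices, as a multilinear map. Over local
factors it is the paper's `g₁ ⊗ ⋯ ⊗ gₙ` acting on `V`; over copies of `V` it models `V^{⊗m}`. -/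
def piKronecker : MultilinearMap R (fun i ↦ Matrix (X i) (X i) R)
    (Matrix (∀ i, X i) (∀ i, X i) R) :=
  MultilinearMap.pi fun a ↦ MultilinearMap.pi fun b ↦
    (MultilinearMap.mkPiAlgebra R ι R).compLinearMap fun i ↦ entryLinearMap R R (a i) (b i)

theorem piKronecker_apply (M : ∀ i, Matrix (X i) (X i) R) (a b : ∀ i, X i) :
    piKronecker M a b = ∏ i, M i (a i) (b i) := rfl

theorem piKronecker_mul [DecidableEq ι] [∀ i, Fintype (X i)] (M N : ∀ i, Matrix (X i) (X i) R) :
    piKronecker (fun i ↦ M i * N i) = piKronecker M * piKronecker N := by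
  ext a b
  simp only [piKronecker_apply, Matrix.mul_apply, ← Finset.prod_mul_distrib]
  rw [Finset.prod_univ_sum, Fintype.piFinset_univ]

variable [∀ i, DecidableEq (X i)]

theorem piKronecker_one :
    piKronecker (fun i ↦ (1 : Matrix (X i) (X i) R)) = 1 := by
  ext a b
  simp [piKronecker_apply, Matrix.one_apply, Finset.prod_ite_zero, funext_iff]

theorem piKronecker_single (a b : ∀ i, X i) :
    piKronecker (fun i ↦ single (a i) (b i) (1 : R)) = single a b 1 := by
  ext a' b'
  simp [piKronecker_apply, Matrix.single_apply, Finset.prod_ite_zero, funext_iff, forall_and]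

variable [DecidableEq ι] [∀ i, Fintype (X i)]

theorem isUnit_piKronecker {M : ∀ i, Matrix (X i) (X i) R}
    (hM : ∀ i, IsUnit (M i)) : IsUnit (piKronecker M) := by
  choose N hMN hNM using fun i ↦ isUnit_iff_exists.mp (hM i)
  refine isUnit_iff_exists.mpr ⟨piKronecker N, ?_, ?_⟩
  · rw [← piKronecker_mul, funext hMN, ← piKronecker_one]
  · rw [← piKronecker_mul, funext hNM, ← piKronecker_one]

/-- The multilinear form `M ↦ tr ((⨂ᵢ Mᵢ) T)` with kernel matrix `T`. -/
def piKroneckerTrace (T : Matrix (∀ i, X i) (∀ i, X i) R) :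
    MultilinearMap R (fun i ↦ Matrix (X i) (X i) R) R :=
  (traceLinearMap _ R R ∘ₗ LinearMap.mulRight R T).compMultilinearMap piKronecker

theorem piKroneckerTrace_apply (T : Matrix (∀ i, X i) (∀ i, X i) R)
    (M : ∀ i, Matrix (X i) (X i) R) : piKroneckerTrace T M = (piKronecker M * T).trace := rfl

theorem piKroneckerTrace_single (T : Matrix (∀ i, X i) (∀ i, X i) R) (a b : ∀ i, X i) :
    piKroneckerTrace T (fun i ↦ single (a i) (b i) 1) = T b a := by
  simp [piKroneckerTrace_apply, piKronecker_single, trace_single_mul]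

theorem piKroneckerTrace_injective :
    Function.Injective (piKroneckerTrace : Matrix (∀ i, X i) (∀ i, X i) R → _) := fun S T h ↦ by
  ext b a
  rw [← piKroneckerTrace_single S, h, piKroneckerTrace_single]

theorem piKroneckerTrace_surjective :
    Function.Surjective (piKroneckerTrace : Matrix (∀ i, X i) (∀ i, X i) R → _) := fun f ↦ by
  refine ⟨of fun b a ↦ f fun i ↦ single (a i) (b i) 1, ?_⟩
  refine Module.Basis.ext_multilinear (fun i ↦ stdBasis R (X i) (X i)) fun v ↦ ?_
  have hv i : stdBasis R (X i) (X i) (v i) = single (v i).1 (v i).2 1 := stdBasis_eq_single R _ _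
  simp only [hv, piKroneckerTrace_single, of_apply]

theorem piKroneckerTrace_conj_eq_iff_commute {R : Type*} [CommRing R]
    {T : Matrix (∀ i, X i) (∀ i, X i) R} {H : ∀ i, Matrix (X i) (X i) R}
    (hH : ∀ i, IsUnit (H i)) :
    (∀ M, piKroneckerTrace T (fun i ↦ H i * M i * (H i)⁻¹) = piKroneckerTrace T M) ↔
      Commute T (piKronecker H) := by
  have hinv : piKronecker (fun i ↦ (H i)⁻¹) = (piKronecker H)⁻¹ := by
    refine (inv_eq_left_inv ?_).symm
    rw [← piKronecker_mul, ← piKronecker_one]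
    exact congrArg _ (funext fun i ↦ nonsing_inv_mul _ ((isUnit_iff_isUnit_det _).mp (hH i)))
  have hconj M : piKroneckerTrace T (fun i ↦ H i * M i * (H i)⁻¹) =
      piKroneckerTrace ((piKronecker H)⁻¹ * T * piKronecker H) M := by
    simp only [piKroneckerTrace_apply, piKronecker_mul, hinv, Matrix.mul_assoc]
    rw [trace_mul_comm]
    simp only [Matrix.mul_assoc]
  have hdet := (isUnit_iff_isUnit_det _).mp (isUnit_piKronecker hH)
  simp only [hconj, ← MultilinearMap.ext_iff, piKroneckerTrace_injective.eq_iff]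
  constructor
  · intro h
    have := congrArg (piKronecker H * ·) h
    rw [commute_iff_eq]
    simpa [← Matrix.mul_assoc, mul_nonsing_inv _ hdet] using this
  · intro h
    rw [Matrix.mul_assoc, h.eq, nonsing_inv_mul_cancel_left _ _ hdet]

end PiKronecker

section SchurWeyl

variable {α ι : Type*} {κ : ι → Type*}

/-- The action of `∏ᵢ S_α` on `V^{⊗α} = ⨂ᵢ Vᵢ^{⊗α}`, given on multi-indices: `σ i` permutes the
`i`-th coordinates. The inverse makes it a left action. -/
def permFactors : (ι → Equiv.Perm α) →* Equiv.Perm (α → ∀ i, κ i) where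
  toFun σ :=
    { toFun a j i := a ((σ i)⁻¹ j) i
      invFun a j i := a (σ i j) i
      left_inv a := by simp
      right_inv a := by simp }
  map_one' := rfl
  map_mul' σ τ := rfl

variable [Fintype α] [Fintype ι]

theorem piKronecker_permFactors {R : Type*} [CommSemiring R] (g : ∀ i, Matrix (κ i) (κ i) R)
    (σ : ι → Equiv.Perm α) (a b : α → ∀ i, κ i) :
    piKronecker (fun _ : α ↦ piKronecker g) (permFactors σ a) (permFactors σ b) =
      piKronecker (fun _ : α ↦ piKronecker g) a b := by
  simp only [piKronecker_apply]
  rw [Finset.prod_comm, Finset.prod_comm (s := Finset.univ (α := α))]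
  exact Finset.prod_congr rfl fun i _ ↦ Equiv.prod_comp (σ i)⁻¹ fun j ↦ g i (a j i) (b j i)

variable [∀ i, Fintype (κ i)] [∀ i, DecidableEq (κ i)] {k : Type*} [Field k]

/-- The exponent of the monomial, in the entries of generic matrices `gᵢ`, that is the `(a, b)`
entry of `(⨂ᵢ gᵢ)^{⊗α}`. The variable `⟨i, (p, q)⟩` stands for the `(p, q)` entry of `gᵢ`. -/
noncomputable def entryCount (a b : α → ∀ i, κ i) : (Σ i, κ i × κ i) →₀ ℕ :=
  Finsupp.equivFunOnFinite.symm fun t ↦ Fintype.card {j // (a j t.1, b j t.1) = t.2}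

theorem prod_entryCount (x : (Σ i, κ i × κ i) → k) (a b : α → ∀ i, κ i) :
    ((entryCount a b).prod fun t n ↦ x t ^ n) = ∏ j, ∏ i, x ⟨i, (a j i, b j i)⟩ := by
  rw [Finsupp.prod_fintype _ _ fun t ↦ pow_zero _, Fintype.prod_sigma, Finset.prod_comm]
  refine Finset.prod_congr rfl fun i _ ↦ ?_
  rw [← Fintype.prod_fiberwise' (fun j ↦ (a j i, b j i)) fun p ↦ x ⟨i, p⟩]
  simp [entryCount]

theorem exists_permFactors_of_entryCount_eq {a b a' b' : α → ∀ i, κ i}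
    (h : entryCount a b = entryCount a' b') :
    ∃ σ : ι → Equiv.Perm α, permFactors σ a = a' ∧ permFactors σ b = b' := by
  have hperm i : ∃ τ : Equiv.Perm α,
      (fun j ↦ (a' j i, b' j i)) = (fun j ↦ (a j i, b j i)) ∘ τ :=
    exists_perm_eq_comp_of_card_fiber_eq fun p ↦ (DFunLike.congr_fun h ⟨i, p⟩).symm
  choose τ hτ using hperm
  refine ⟨fun i ↦ (τ i)⁻¹, ?_, ?_⟩ <;> funext j i
  · exact (congrArg Prod.fst (congrFun (hτ i) j)).symm
  · exact (congrArg Prod.snd (congrFun (hτ i) j)).symm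

variable [DecidableEq α] [DecidableEq ι]

theorem mem_span_piKronecker_of_commute [Infinite k]
    {S : Matrix (α → ∀ i, κ i) (α → ∀ i, κ i) k}
    (hS : ∀ σ : ι → Equiv.Perm α, Commute S ((permFactors σ).permMatrix k)) :
    S ∈ Submodule.span k ((fun g ↦ piKronecker fun _ : α ↦ piKronecker g) ''
      {g : ∀ i, Matrix (κ i) (κ i) k | ∀ i, IsUnit (g i)}) := by
  obtain ⟨f, hf, hunit⟩ := exists_mvPolynomial_ne_zero_isUnit (κ := κ) (k := k)
  have hfactors : Function.FactorsThrough (fun ab : (α → ∀ i, κ i) × (α → ∀ i, κ i) ↦ S ab.1 ab.2)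
      (fun ab ↦ entryCount ab.1 ab.2) := by
    rintro ⟨a, b⟩ ⟨a', b'⟩ h
    obtain ⟨σ, rfl, rfl⟩ := exists_permFactors_of_entryCount_eq h
    exact (commute_permMatrix_iff.mp (hS σ) a b).symm
  have hspan := Submodule.mem_map_of_mem (f := (LinearEquiv.curry k k _ _).toLinearMap)
    (mem_span_monomials_of_factorsThrough _ hf hfactors)
  rw [Submodule.map_span, Set.image_image] at hspan
  refine Submodule.span_mono ?_ hspan
  rintro _ ⟨x, hx, rfl⟩
  exact ⟨fun i ↦ Matrix.of fun p q ↦ x ⟨i, (p, q)⟩, hunit x hx,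
    funext₂ fun a b ↦ (prod_entryCount x a b).symm⟩

theorem commute_piKronecker_iff_mem_span_permMatrix [Infinite k]
    (hα : ((Fintype.card α).factorial : k) ≠ 0) {T : Matrix (α → ∀ i, κ i) (α → ∀ i, κ i) k} :
    (∀ g : ∀ i, Matrix (κ i) (κ i) k, (∀ i, IsUnit (g i)) →
      Commute T (piKronecker fun _ : α ↦ piKronecker g)) ↔
    T ∈ Submodule.span k (Set.range fun σ : ι → Equiv.Perm α ↦ (permFactors σ).permMatrix k) := by
  have : NeZero (Nat.card (ι → Equiv.Perm α) : k) := ⟨by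
    simpa [Nat.card_eq_fintype_card, Fintype.card_perm] using pow_ne_zero (Fintype.card ι) hα⟩
  constructor
  · intro hT
    refine mem_span_permMatrix_of_commute permFactors fun S hS ↦ ?_
    have hle : Submodule.span k ((fun g ↦ piKronecker fun _ : α ↦ piKronecker g) ''
        {g : ∀ i, Matrix (κ i) (κ i) k | ∀ i, IsUnit (g i)}) ≤
        Subalgebra.toSubmodule (Subalgebra.centralizer k {T}) := by
      rw [Submodule.span_le]
      rintro _ ⟨g, hg, rfl⟩ _ rfl
      exact hT g hg
    exact hle (mem_span_piKronecker_of_commute hS) T rfl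
  · intro hT g _
    have hle : Submodule.span k (Set.range fun σ : ι → Equiv.Perm α ↦
        (permFactors σ).permMatrix k) ≤ Subalgebra.toSubmodule
          (Subalgebra.centralizer k {piKronecker fun _ : α ↦ piKronecker g}) := by
      rw [Submodule.span_le]
      rintro _ ⟨σ, rfl⟩ _ rfl
      exact commute_permMatrix_iff.mpr (piKronecker_permFactors g σ)
    exact (hle hT _ rfl).symm

end SchurWeyl

theorem isMultilinearFn_iff {k : Type*} [Field k] {m : ℕ} {α : Type*} [AddCommGroup α] [Module k α]
    {F : (Fin m → α) → k} :
    IsMultilinearFn F ↔ ∃ f : MultilinearMap k (fun _ : Fin m ↦ α) k, ⇑f = F := by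
  constructor
  · intro hF
    have h0 M j : F (Function.update M j 0) = 0 := by simpa using hF M j 0 0 1
    exact ⟨MultilinearMap.mk' F (fun M j x y ↦ by simpa using hF M j x y 1)
      (fun M j c x ↦ by simpa [h0] using hF M j 0 x c), rfl⟩
  · rintro ⟨f, rfl⟩ M j x y c
    simp

theorem trMon_eq_piKroneckerTrace {k : Type*} [Field k] {n m : ℕ} {d : Fin n → ℕ}
    (σ : Fin n → Equiv.Perm (Fin m))
    (M : Fin m → Matrix (∀ i, Fin (d i)) (∀ i, Fin (d i)) k) :
    trMon σ M = piKroneckerTrace ((permFactors σ).permMatrix k) M := by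
  rw [piKroneckerTrace_apply, PEquiv.mul_toMatrix_toPEquiv]
  rfl

theorem piKroneckerTrace_sum_smul_permMatrix {k : Type*} [Field k] {n m : ℕ} {d : Fin n → ℕ}
    (c : (Fin n → Equiv.Perm (Fin m)) → k)
    (M : Fin m → Matrix (∀ i, Fin (d i)) (∀ i, Fin (d i)) k) :
    piKroneckerTrace (∑ σ, c σ • (permFactors σ).permMatrix k) M = ∑ σ, c σ * trMon σ M := by
  simp [trMon_eq_piKroneckerTrace, piKroneckerTrace_apply, Matrix.mul_sum, Matrix.trace_sum]

theorem stmt_6_general {k : Type*} [Field k] [Infinite k] {n m : ℕ} (hm : (m.factorial : k) ≠ 0)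
    (d : Fin n → ℕ)
    (F : (Fin m → Matrix (∀ i, Fin (d i)) (∀ i, Fin (d i)) k) → k) :
    (IsMultilinearFn F ∧
      ∀ g : ∀ i, Matrix (Fin (d i)) (Fin (d i)) k, (∀ i, IsUnit (g i)) →
        ∀ M, F (fun j => kron g * M j * (kron g)⁻¹) = F M) ↔
    (∃ c : (Fin n → Equiv.Perm (Fin m)) → k,
      F = fun M => ∑ σ : Fin n → Equiv.Perm (Fin m), c σ * trMon σ M) := by
  have hinvariant T : (∀ g : ∀ i, Matrix (Fin (d i)) (Fin (d i)) k, (∀ i, IsUnit (g i)) →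
      ∀ M : Fin m → _, piKroneckerTrace T (fun j ↦ kron g * M j * (kron g)⁻¹) =
        piKroneckerTrace T M) ↔ ∃ c : (Fin n → Equiv.Perm (Fin m)) → k,
          ∑ σ, c σ • (permFactors σ).permMatrix k = T := by
    rw [← Submodule.mem_span_range_iff_exists_fun,
      ← commute_piKronecker_iff_mem_span_permMatrix (by simpa using hm)]
    exact forall₂_congr fun g hg ↦
      piKroneckerTrace_conj_eq_iff_commute fun _ ↦ isUnit_piKronecker hg
  constructor
  · rintro ⟨hF, hinv⟩
    obtain ⟨f, rfl⟩ := isMultilinearFn_iff.mp hF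
    obtain ⟨T, rfl⟩ := piKroneckerTrace_surjective f
    obtain ⟨c, rfl⟩ := (hinvariant T).mp hinv
    exact ⟨c, funext (piKroneckerTrace_sum_smul_permMatrix c)⟩
  · rintro ⟨c, rfl⟩
    rw [← funext (piKroneckerTrace_sum_smul_permMatrix c)]
    exact ⟨isMultilinearFn_iff.mpr ⟨_, rfl⟩, (hinvariant _).mpr ⟨c, rfl⟩⟩

/-- The multilinear `GL_d`-invariant functions on `End(V)^{⊕m}`, where
`GL_d = GL(V₁)×⋯×GL(Vₙ)` acts by simultaneous local conjugation on `V = V₁⊗⋯⊗Vₙ`,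
are exactly the linear span of the trace monomials `Tr_σ`, `σ ∈ (S_m)ⁿ`. -/
theorem stmt_6 {k : Type*} [Field k] [IsAlgClosed k] [CharZero k] {n m : ℕ}
    (d : Fin n → ℕ)
    (F : (Fin m → Matrix (∀ i, Fin (d i)) (∀ i, Fin (d i)) k) → k) :
    (IsMultilinearFn F ∧
      ∀ g : ∀ i, Matrix (Fin (d i)) (Fin (d i)) k, (∀ i, IsUnit (g i)) →
        ∀ M, F (fun j => kron g * M j * (kron g)⁻¹) = F M) ↔
    (∃ c : (Fin n → Equiv.Perm (Fin m)) → k,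
      F = fun M => ∑ σ : Fin n → Equiv.Perm (Fin m), c σ * trMon σ M) :=
  stmt_6_general (Nat.cast_ne_zero.mpr m.factorial_ne_zero) d F
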